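/- arXiv:2105.01887 — 5 statements merged into one kernel-verified Lean document; each statement's English description precedes it below -/
import Mathlib

section
/- Let I ⊆ ℝ be an open interval, let λ : I → ℝ be smooth with λ(u) > 0 for all u ∈ I, let b > 0, and define K(u) = (−λ(u)·λ''(u) + λ'(u)²)/λ(u)⁴. Assume −2b² − K(u) > 0 on I and that the Ricci condition (1/λ(u)²)·(d²/du²)[log √(−2b² − K(u))] = 2K(u) holds on I. Then there exist constants c₁ > 0 and c₂ ∈ ℝ such that λ(u)⁴·(−2b² − K(u)) = c₁·exp(c₂·u) for all u ∈ I. -/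
/-- If the conformal factor of a special Liouville metric satisfies the
Ricci condition, then `λ⁴(-2b² - K) = c₁ exp(c₂ u)` for some constants `c₁ > 0`, `c₂`. -/
theorem stmt_1 (I : Set ℝ) (hI : IsOpen I) (hI' : I.OrdConnected) (lam : ℝ → ℝ) (b : ℝ) (hb : 0 < b)
    (hlam : ContDiffOn ℝ (⊤ : ℕ∞) lam (I))
    (hpos : ∀ u ∈ I, 0 < lam u)
    (K : ℝ → ℝ)
    (hK : ∀ u, K u =
      (-(lam u) * deriv (deriv lam) u + (deriv lam u) ^ 2) / (lam u) ^ 4)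
    (hKneg : ∀ u ∈ I, 0 < -2 * b ^ 2 - K u)
    (hRicci : ∀ u ∈ I,
      (1 / (lam u) ^ 2) *
        deriv (deriv (fun t => Real.log (Real.sqrt (-2 * b ^ 2 - K t)))) u = 2 * K u) :
    ∃ c₁ : ℝ, 0 < c₁ ∧ ∃ c₂ : ℝ, ∀ u ∈ I,
      (lam u) ^ 4 * (-2 * b ^ 2 - K u) = c₁ * Real.exp (c₂ * u) := by
  rcases I.eq_empty_or_nonempty with rfl | ⟨x₀, hx₀⟩
  · exact ⟨1, one_pos, 0, by simp⟩
  have h1 : ContDiffOn ℝ (⊤ : ℕ∞) (deriv lam) I := hlam.deriv_of_isOpen hI (by simp)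
  have h2 : ContDiffOn ℝ (⊤ : ℕ∞) (deriv (deriv lam)) I := h1.deriv_of_isOpen hI (by simp)
  have hKs : ContDiffOn ℝ (⊤ : ℕ∞) K I := by
    have : K = fun u => (-(lam u) * deriv (deriv lam) u + (deriv lam u) ^ 2) / (lam u) ^ 4 :=
      funext hK
    rw [this]
    exact ((hlam.neg.mul h2).add (h1.pow 2)).div (hlam.pow 4)
      (fun u hu => (pow_pos (hpos u hu) 4).ne')
  set f : ℝ → ℝ := fun t => Real.log (Real.sqrt (-2 * b ^ 2 - K t)) with hf
  have hfs : ContDiffOn ℝ (⊤ : ℕ∞) f I :=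
    ((contDiffOn_const.sub hKs).sqrt (fun u hu => (hKneg u hu).ne')).log
      (fun u hu => (Real.sqrt_pos.2 (hKneg u hu)).ne')
  have hf1 : ContDiffOn ℝ (⊤ : ℕ∞) (deriv f) I := hfs.deriv_of_isOpen hI (by simp)
  have D : ∀ g : ℝ → ℝ, ContDiffOn ℝ (⊤ : ℕ∞) g I → ∀ u ∈ I, HasDerivAt g (deriv g u) u :=
    fun g hg u hu => ((hg.contDiffAt (hI.mem_nhds hu)).differentiableAt (by simp)).hasDerivAt
  have const : ∀ g : ℝ → ℝ, (∀ u ∈ I, HasDerivAt g 0 u) → ∀ u ∈ I, g u = g x₀ := by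
    intro g hg u hu
    exact hI.is_const_of_deriv_eq_zero hI'.isPreconnected
      (fun x hx => (hg x hx).differentiableAt.differentiableWithinAt)
      (fun x hx => (hg x hx).deriv) hu hx₀
  have c1 := const (fun u => deriv f u + 2 * (deriv lam u / lam u)) (by
    intro u hu
    have hl := (hpos u hu).ne'
    have := (D _ hf1 u hu).add (((D _ h1 u hu).div (D _ hlam u hu) hl).const_mul 2)
    refine this.congr_deriv ?_
    have hr := hRicci u hu
    rw [hK u] at hr
    have : deriv (deriv f) u = lam u ^ 2 *
        (2 * ((-(lam u) * deriv (deriv lam) u + (deriv lam u) ^ 2) / (lam u) ^ 4)) := by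
      rw [← hr]; field_simp
    rw [this]; field_simp; ring)
  obtain ⟨c, hc⟩ : ∃ c, c = deriv f x₀ + 2 * (deriv lam x₀ / lam x₀) := ⟨_, rfl⟩
  have c2 := const (fun u => f u + 2 * Real.log (lam u) - c * u) (by
    intro u hu
    have hl := (hpos u hu).ne'
    have := ((D _ hfs u hu).add (((D _ hlam u hu).log hl).const_mul 2)).sub
      ((hasDerivAt_id u).const_mul c)
    refine this.congr_deriv ?_
    have := c1 u hu
    rw [hc]; linear_combination this)
  obtain ⟨d, hd⟩ : ∃ d, d = f x₀ + 2 * Real.log (lam x₀) - c * x₀ := ⟨_, rfl⟩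
  refine ⟨Real.exp (2 * d), Real.exp_pos _, 2 * c, fun u hu => ?_⟩
  have h := c2 u hu
  rw [← hd] at h
  have hM := hKneg u hu
  have hfu : f u = Real.log (-2 * b ^ 2 - K u) / 2 := by
    rw [hf]; exact Real.log_sqrt hM.le
  rw [← Real.exp_add, show 2 * d + 2 * c * u
    = 4 * Real.log (lam u) + Real.log (-2 * b ^ 2 - K u) by rw [hfu] at h; linarith,
    Real.exp_add, Real.exp_log hM]
  congr 1
  rw [show (4 : ℝ) * Real.log (lam u) = ((4 : ℕ) : ℝ) * Real.log (lam u) by norm_num,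
    Real.exp_nat_mul, Real.exp_log (hpos u hu)]
end

section
/- Let b > 0, c₁ > 0, c₂ ∈ ℝ, and set s = √(c₂² + 8b²c₁) and λ₊ = (−c₂ + s)/(4b²). Let I ⊆ ℝ be an open interval and λ : I → ℝ a smooth positive function satisfying both λ''(u)·λ(u) − λ'(u)² = c₁ + 2b²·λ(u)⁴ and λ'(u)² = −c₁ + c₂·λ(u)² + 2b²·λ(u)⁴ on I. Then the Gaussian curvature K(u) = (−λ(u)λ''(u) + λ'(u)²)/λ(u)⁴ of the special Liouville metric λ(u)²(du² + dv²) satisfies K(u) = −2b² − c₁/λ(u)⁴ and −2b² − c₁/λ₊² ≤ K(u) < −2b² for all u ∈ I. -/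
/-- For a conformal factor satisfying the curvature equation and its first
integral, the Gaussian curvature is `K = -2b² - c₁/λ⁴` and `-2b² - c₁/λ₊² ≤ K < -2b²`. -/
theorem stmt_4 (b c₁ c₂ s lamPlus : ℝ) (hb : 0 < b) (hc₁ : 0 < c₁)
    (hs : s = Real.sqrt (c₂ ^ 2 + 8 * b ^ 2 * c₁))
    (hlamPlus : lamPlus = (-c₂ + s) / (4 * b ^ 2))
    (I : Set ℝ) (hI : IsOpen I) (hI' : I.OrdConnected) (lam : ℝ → ℝ)
    (hlam : ContDiffOn ℝ (⊤ : ℕ∞) lam (I))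
    (hpos : ∀ u ∈ I, 0 < lam u)
    (hODE1 : ∀ u ∈ I,
      deriv (deriv lam) u * lam u - (deriv lam u) ^ 2 = c₁ + 2 * b ^ 2 * (lam u) ^ 4)
    (hODE2 : ∀ u ∈ I,
      (deriv lam u) ^ 2 = -c₁ + c₂ * (lam u) ^ 2 + 2 * b ^ 2 * (lam u) ^ 4)
    (K : ℝ → ℝ)
    (hK : ∀ u, K u =
      (-(lam u) * deriv (deriv lam) u + (deriv lam u) ^ 2) / (lam u) ^ 4) :
    ∀ u ∈ I,
      K u = -2 * b ^ 2 - c₁ / (lam u) ^ 4 ∧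
      -2 * b ^ 2 - c₁ / lamPlus ^ 2 ≤ K u ∧ K u < -2 * b ^ 2 := by
  intro u hu
  have hl := hpos u hu
  have h1 := hODE1 u hu
  have h2 := hODE2 u hu
  have hb2 : 0 < b ^ 2 := by positivity
  have hbc : 0 < b ^ 2 * c₁ := by positivity
  have hs0 : 0 ≤ s := hs ▸ Real.sqrt_nonneg _
  have hss : s ^ 2 = c₂ ^ 2 + 8 * b ^ 2 * c₁ := by
    rw [hs, Real.sq_sqrt (by positivity)]
  have hsc : c₂ < s := by
    apply lt_of_pow_lt_pow_left₀ 2 hs0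
    linarith
  have hL : 0 < lamPlus := by
    rw [hlamPlus]
    apply div_pos <;> linarith
  have hLs : 4 * b ^ 2 * lamPlus = -c₂ + s := by
    rw [hlamPlus]
    field_simp
  have hroot : 2 * b ^ 2 * lamPlus ^ 2 + c₂ * lamPlus = c₁ := by
    have hs' : s = 4 * b ^ 2 * lamPlus + c₂ := by linarith
    rw [hs'] at hss
    have h8 : (8 * b ^ 2) * (2 * b ^ 2 * lamPlus ^ 2 + c₂ * lamPlus) = (8 * b ^ 2) * c₁ := by
      linarith
    exact mul_left_cancel₀ (by positivity) h8
  have hfac : 0 < 2 * b ^ 2 * lamPlus + c₂ := by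
    have : 0 < lamPlus * (2 * b ^ 2 * lamPlus + c₂) := by linarith
    exact (mul_pos_iff_of_pos_left hL).1 this
  have ht : lamPlus ≤ lam u ^ 2 := by
    have hq : 0 < 2 * b ^ 2 * lam u ^ 2 + (2 * b ^ 2 * lamPlus + c₂) := by positivity
    have hp : 0 ≤ (lam u ^ 2 - lamPlus) *
        (2 * b ^ 2 * lam u ^ 2 + (2 * b ^ 2 * lamPlus + c₂)) := by
      have := sq_nonneg (deriv lam u)
      linarith
    linarith [nonneg_of_mul_nonneg_left hp hq]
  have hKu : K u = -2 * b ^ 2 - c₁ / (lam u) ^ 4 := by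
    have hn : -(lam u) * deriv (deriv lam) u + (deriv lam u) ^ 2
        = -(c₁ + 2 * b ^ 2 * (lam u) ^ 4) := by linarith
    rw [hK u, hn]
    field_simp
    ring
  have h4 : lamPlus ^ 2 ≤ lam u ^ 4 := by
    calc lamPlus ^ 2 ≤ (lam u ^ 2) ^ 2 := by gcongr
      _ = lam u ^ 4 := by ring
  refine ⟨hKu, ?_, ?_⟩
  · rw [hKu]
    gcongr
  · rw [hKu]
    have : 0 < c₁ / lam u ^ 4 := by positivity
    linarith
end

section
/- Let b > 0, c₁ > 0, c₂ ∈ ℝ, and set s = √(c₂² + 8b²c₁) and λ₊ = (−c₂ + s)/(4b²). Let I ⊆ ℝ be an open interval and λ : I → ℝ a smooth positive function satisfying both λ''(u)·λ(u) − λ'(u)² = c₁ + 2b²·λ(u)⁴ and λ'(u)² = −c₁ + c₂·λ(u)² + 2b²·λ(u)⁴ on I. If θ : I → ℝ is a smooth function with cos θ(u) = √λ₊ / λ(u) for all u ∈ I, then θ'(u)² = s − ((c₂ + s)/2)·sin² θ(u) for all u ∈ I. -/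
/-- Substituting `cos θ = √λ₊ / λ` into the first integral of the curvature
equation yields `θ'² = s - ((c₂ + s)/2) sin²θ`, where `s = √(c₂² + 8b²c₁)`. -/
theorem stmt_5 (b c₁ c₂ s lamPlus : ℝ) (hb : 0 < b) (hc₁ : 0 < c₁)
    (hs : s = Real.sqrt (c₂ ^ 2 + 8 * b ^ 2 * c₁))
    (hlamPlus : lamPlus = (-c₂ + s) / (4 * b ^ 2))
    (I : Set ℝ) (hI : IsOpen I) (hI' : I.OrdConnected) (lam : ℝ → ℝ)
    (hlam : ContDiffOn ℝ (⊤ : ℕ∞) lam (I))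
    (hpos : ∀ u ∈ I, 0 < lam u)
    (hODE1 : ∀ u ∈ I,
      deriv (deriv lam) u * lam u - (deriv lam u) ^ 2 = c₁ + 2 * b ^ 2 * (lam u) ^ 4)
    (hODE2 : ∀ u ∈ I,
      (deriv lam u) ^ 2 = -c₁ + c₂ * (lam u) ^ 2 + 2 * b ^ 2 * (lam u) ^ 4)
    (θ : ℝ → ℝ) (hθ : ContDiffOn ℝ (⊤ : ℕ∞) θ (I))
    (hcosθ : ∀ u ∈ I, Real.cos (θ u) = Real.sqrt lamPlus / lam u) :
    ∀ u ∈ I,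
      (deriv θ u) ^ 2 = s - ((c₂ + s) / 2) * Real.sin (θ u) ^ 2 := by
  have hlamD : ∀ u ∈ I, HasDerivAt lam (deriv lam u) u := fun u hu =>
    ((hlam.differentiableOn (by simp)).differentiableAt (hI.mem_nhds hu)).hasDerivAt
  have hθD : ∀ u ∈ I, HasDerivAt θ (deriv θ u) u := fun u hu =>
    ((hθ.differentiableOn (by simp)).differentiableAt (hI.mem_nhds hu)).hasDerivAt
  have hlamDD : ∀ u ∈ I, HasDerivAt (deriv lam) (deriv (deriv lam) u) u := fun u hu =>
    (((hlam.deriv_of_isOpen (m := 1) hI (WithTop.coe_le_coe.2 (le_top : (1 + 1 : ℕ∞) ≤ ⊤))).differentiableOn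
      (by simp)).differentiableAt (hI.mem_nhds hu)).hasDerivAt
  have hθDD : ∀ u ∈ I, HasDerivAt (deriv θ) (deriv (deriv θ) u) u := fun u hu =>
    (((hθ.deriv_of_isOpen (m := 1) hI (WithTop.coe_le_coe.2 (le_top : (1 + 1 : ℕ∞) ≤ ⊤))).differentiableOn
      (by simp)).differentiableAt (hI.mem_nhds hu)).hasDerivAt
  have hb2 : 0 < b ^ 2 := by positivity
  have hss : s ^ 2 = c₂ ^ 2 + 8 * b ^ 2 * c₁ := by
    rw [hs]; exact Real.sq_sqrt (by positivity)
  have hs0 : 0 ≤ s := by rw [hs]; exact Real.sqrt_nonneg _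
  have hsc : c₂ < s := by
    apply lt_of_pow_lt_pow_left₀ 2 hs0
    rw [hss]; nlinarith [mul_pos hb2 hc₁]
  have hL : 0 < lamPlus := by
    rw [hlamPlus]; apply div_pos <;> linarith
  have hL4 : s = c₂ + 4 * b ^ 2 * lamPlus := by
    rw [hlamPlus]; field_simp; ring
  have hroot : c₁ = 2 * b ^ 2 * lamPlus ^ 2 + c₂ * lamPlus := by
    rw [hL4] at hss
    have : (8 * b ^ 2) * c₁ = (8 * b ^ 2) * (2 * b ^ 2 * lamPlus ^ 2 + c₂ * lamPlus) := by
      linarith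
    exact mul_left_cancel₀ (by positivity) this
  have hmul : ∀ u ∈ I, Real.cos (θ u) * lam u = Real.sqrt lamPlus := fun u hu => by
    rw [hcosθ u hu]; exact div_mul_cancel₀ _ (hpos u hu).ne'
  have hG : ∀ u ∈ I, -Real.sin (θ u) * deriv θ u * lam u + Real.cos (θ u) * deriv lam u = 0 := by
    intro u hu
    have h1 := (hθD u hu).cos.mul (hlamD u hu)
    have h2 : HasDerivAt (fun x => Real.cos (θ x) * lam x) 0 u :=
      (hasDerivAt_const u (Real.sqrt lamPlus)).congr_of_eventuallyEq
        (Filter.eventually_of_mem (hI.mem_nhds hu) hmul)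
    exact h1.unique h2
  intro u hu
  have hl := hpos u hu
  have hg := hG u hu
  have hm := hmul u hu
  have hm2 : Real.cos (θ u) ^ 2 * lam u ^ 2 = lamPlus := by
    rw [← mul_pow, hm, Real.sq_sqrt hL.le]
  have htrig := Real.sin_sq_add_cos_sq (θ u)
  by_cases hsin : Real.sin (θ u) = 0
  · have h1 := (((hθD u hu).sin.neg.mul (hθDD u hu)).mul (hlamD u hu)).add
      ((hθD u hu).cos.mul (hlamDD u hu))
    have h2 : HasDerivAt (fun x => -Real.sin (θ x) * deriv θ x * lam x
        + Real.cos (θ x) * deriv lam x) 0 u :=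
      (hasDerivAt_const u (0 : ℝ)).congr_of_eventuallyEq
        (Filter.eventually_of_mem (hI.mem_nhds hu) hG)
    have h3 := h1.unique h2
    have hcpos : Real.cos (θ u) ≠ 0 := by
      intro h; rw [h, hsin] at htrig; norm_num at htrig
    have hc2 : Real.cos (θ u) ^ 2 = 1 := by rw [hsin] at htrig; linarith
    rw [hc2, one_mul] at hm2
    simp only [hsin, Pi.mul_apply, Pi.neg_apply] at h3 hg
    have hl' : deriv lam u = 0 := by
      have : Real.cos (θ u) * deriv lam u = 0 := by linarith
      exact (mul_eq_zero.mp this).resolve_left hcpos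
    have h4 : deriv (deriv lam) u = deriv θ u ^ 2 * lam u := by
      apply mul_left_cancel₀ hcpos
      simp only [hl'] at h3
      linarith
    have h5 := hODE1 u hu
    rw [h4, hl'] at h5
    rw [hsin, hL4]
    apply mul_right_cancel₀ hL.ne'
    rw [← hm2] at hroot ⊢
    linarith
  · have h2 := hODE2 u hu
    have hsq : Real.sin (θ u) ^ 2 * deriv θ u ^ 2 * lam u ^ 2
        = Real.cos (θ u) ^ 2 * deriv lam u ^ 2 := by
      have : Real.sin (θ u) * deriv θ u * lam u = Real.cos (θ u) * deriv lam u := by linarith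
      rw [← mul_pow, ← mul_pow, this, mul_pow]
    have hX : Real.sin (θ u) ^ 2 * lam u ^ 2 ≠ 0 := by positivity
    apply mul_left_cancel₀ hX
    have hS : Real.sin (θ u) ^ 2 = 1 - Real.cos (θ u) ^ 2 := by linarith
    have e : Real.sin (θ u) ^ 2 * lam u ^ 2 * deriv θ u ^ 2
        = Real.cos (θ u) ^ 2 * deriv lam u ^ 2 := by linarith
    rw [e, h2, hL4, hroot, hS, ← hm2]
    ring
end

section
/- Let b > 0, c₁ > 0, c₂ ∈ ℝ, set s = √(c₂² + 8b²c₁), λ₊ = (−c₂ + s)/(4b²), and k² = (c₂ + s)/(2s). Let I ⊆ ℝ be an open interval and θ : I → ℝ a smooth function with cos θ(u) > 0 on I and θ'(u)² = s·(1 − k²·sin² θ(u)) on I. Then the function λ(u) = √λ₊ / cos θ(u) is smooth and positive on I and satisfies both λ'(u)² = −c₁ + c₂·λ(u)² + 2b²·λ(u)⁴ and λ''(u)·λ(u) − λ'(u)² = c₁ + 2b²·λ(u)⁴ on I; consequently the special Liouville metric λ(u)²(du² + dv²) has Gaussian curvature K = −2b² − c₁/λ⁴ < −2b² and satisfies the Ricci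 condition (1/λ²)(log √(−2b² − K))'' = 2K. -/
/-- If `θ'² = s(1 - k² sin²θ)` with `cos θ > 0`, then `λ = √λ₊ / cos θ` is a
smooth positive solution of the curvature equation and its first integral; the associated
special Liouville metric has curvature `K = -2b² - c₁/λ⁴ < -2b²` and satisfies the
Ricci condition. -/
theorem stmt_8 (b c₁ c₂ s lamPlus k : ℝ) (I : Set ℝ) (hI : IsOpen I) (hI' : I.OrdConnected) (hb : 0 < b) (hc₁ : 0 < c₁)
    (hs : s = Real.sqrt (c₂ ^ 2 + 8 * b ^ 2 * c₁))
    (hlamPlus : lamPlus = (-c₂ + s) / (4 * b ^ 2))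
    (hk : k ^ 2 = (c₂ + s) / (2 * s))
    (θ : ℝ → ℝ) (hθ : ContDiffOn ℝ (⊤ : ℕ∞) θ (I))
    (hcos : ∀ u ∈ I, 0 < Real.cos (θ u))
    (hθ' : ∀ u ∈ I,
      (deriv θ u) ^ 2 = s * (1 - k ^ 2 * Real.sin (θ u) ^ 2))
    (lam : ℝ → ℝ) (hlam : ∀ u, lam u = Real.sqrt lamPlus / Real.cos (θ u))
    (K : ℝ → ℝ)
    (hK : ∀ u, K u =
      (-(lam u) * deriv (deriv lam) u + (deriv lam u) ^ 2) / (lam u) ^ 4) :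
    ContDiffOn ℝ (⊤ : ℕ∞) lam (I) ∧
    (∀ u ∈ I, 0 < lam u) ∧
    (∀ u ∈ I,
      (deriv lam u) ^ 2 = -c₁ + c₂ * (lam u) ^ 2 + 2 * b ^ 2 * (lam u) ^ 4) ∧
    (∀ u ∈ I,
      deriv (deriv lam) u * lam u - (deriv lam u) ^ 2 = c₁ + 2 * b ^ 2 * (lam u) ^ 4) ∧
    (∀ u ∈ I,
      K u = -2 * b ^ 2 - c₁ / (lam u) ^ 4 ∧ K u < -2 * b ^ 2) ∧
    (∀ u ∈ I,
      (1 / (lam u) ^ 2) *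
        deriv (deriv (fun t => Real.log (Real.sqrt (-2 * b ^ 2 - K t)))) u = 2 * K u) := by
  have hb2 : 0 < b ^ 2 := by positivity
  have hs2 : s ^ 2 = c₂ ^ 2 + 8 * b ^ 2 * c₁ := by
    rw [hs, Real.sq_sqrt (by positivity)]
  have hspos : 0 < s := by rw [hs]; exact Real.sqrt_pos.mpr (by positivity)
  have hprod : 0 < b ^ 2 * c₁ := by positivity
  have hc2s : |c₂| < s := abs_lt_of_sq_lt_sq (by nlinarith) hspos.le
  obtain ⟨hlow, hup⟩ := abs_lt.mp hc2s
  have hL : 0 < lamPlus := by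
    rw [hlamPlus]; apply div_pos <;> linarith
  have hL1 : 4 * b ^ 2 * lamPlus = s - c₂ := by rw [hlamPlus]; field_simp; ring
  obtain ⟨m, hm⟩ : ∃ m, m = k ^ 2 := ⟨_, rfl⟩
  rw [← hm] at hk hθ'
  have hm1 : 2 * (s * m) = c₂ + s := by rw [hk]; field_simp
  have hm0 : 0 ≤ m := by rw [hm]; positivity
  have hmlt : m < 1 := by
    rw [hk, div_lt_one (by linarith)]; linarith
  obtain ⟨r, hr⟩ : ∃ r, r = Real.sqrt lamPlus := ⟨_, rfl⟩
  have hrpos : 0 < r := by rw [hr]; exact Real.sqrt_pos.mpr hL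
  have hr2 : r ^ 2 = lamPlus := by rw [hr, Real.sq_sqrt hL.le]
  rw [← hr] at hlam
  have hlamf : lam = fun u => r / Real.cos (θ u) := funext hlam
  have hd1 : ∀ u ∈ I, HasDerivAt θ (deriv θ u) u := fun u hu =>
    ((hθ.contDiffAt (hI.mem_nhds hu)).differentiableAt (by simp)).hasDerivAt
  have hdθ : ContDiffOn ℝ (⊤ : ℕ∞) (deriv θ) I := hθ.deriv_of_isOpen hI (by simp)
  have hd2 : ∀ u ∈ I, HasDerivAt (deriv θ) (deriv (deriv θ) u) u := fun u hu =>
    ((hdθ.contDiffAt (hI.mem_nhds hu)).differentiableAt (by simp)).hasDerivAt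
  have hθ'' : ∀ u ∈ I, deriv (deriv θ) u = - (s * m) * Real.sin (θ u) * Real.cos (θ u) := by
    intro u hu
    have e1 : HasDerivAt (fun t => (deriv θ t) ^ 2) (2 * deriv θ u * deriv (deriv θ) u) u := by
      have := (hd2 u hu).pow 2
      exact this.congr_deriv (by simp)
    have e2 : HasDerivAt (fun t => s * (1 - m * Real.sin (θ t) ^ 2))
        (s * (-(m * (2 * Real.sin (θ u) * (Real.cos (θ u) * deriv θ u))))) u := by
      have := ((((hd1 u hu).sin.pow 2).const_mul m).const_sub 1).const_mul s
      simpa using this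
    have e3 := e1.unique (e2.congr_of_eventuallyEq
      (Filter.eventually_of_mem (hI.mem_nhds hu) hθ'))
    have hne : deriv θ u ≠ 0 := by
      intro h0
      have h1 := hθ' u hu
      rw [h0] at h1
      have h2 : 0 < 1 - m * Real.sin (θ u) ^ 2 := by
        nlinarith [Real.sin_sq_le_one (θ u), sq_nonneg (Real.sin (θ u))]
      have := mul_pos hspos h2
      nlinarith
    apply mul_left_cancel₀ hne
    linarith
  have hl1 : ∀ u ∈ I, HasDerivAt lam
      (r * Real.sin (θ u) * deriv θ u / Real.cos (θ u) ^ 2) u := by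
    intro u hu
    rw [hlamf]
    have := (hasDerivAt_const u r).div (hd1 u hu).cos (hcos u hu).ne'
    refine this.congr_deriv ?_
    ring
  have hl2 : ∀ u ∈ I, HasDerivAt (deriv lam)
      (((r * (Real.cos (θ u) * deriv θ u)) * deriv θ u
        + r * Real.sin (θ u) * deriv (deriv θ) u) / Real.cos (θ u) ^ 2
        + 2 * r * Real.sin (θ u) ^ 2 * deriv θ u ^ 2 / Real.cos (θ u) ^ 3) u := by
    intro u hu
    have hc := (hcos u hu).ne'
    have := (((hd1 u hu).sin.const_mul r).mul (hd2 u hu)).div ((hd1 u hu).cos.pow 2)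
      (pow_ne_zero 2 hc)
    refine (this.congr_of_eventuallyEq (Filter.eventually_of_mem (hI.mem_nhds hu)
      (fun t ht => (hl1 t ht).deriv))).congr_deriv ?_
    simp
    field_simp
  have hpos : ∀ u ∈ I, 0 < lam u := fun u hu => by
    rw [hlam]; exact div_pos hrpos (hcos u hu)
  have hb4 : 2 * b ^ 2 * r ^ 2 = s - s * m := by rw [hr2]; linarith
  have hc1 : r ^ 2 * (s * m) = c₁ := by
    apply mul_left_cancel₀ (show (8 * b ^ 2) ≠ 0 by positivity)
    have : 8 * b ^ 2 * (r ^ 2 * (s * m)) = (4 * b ^ 2 * lamPlus) * (2 * (s * m)) := by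
      rw [hr2]; ring
    rw [this, hL1, hm1]; linarith
  have hc2 : c₂ = 2 * (s * m) - s := by linarith
  have hfirst : ∀ u ∈ I,
      (deriv lam u) ^ 2 = -c₁ + c₂ * (lam u) ^ 2 + 2 * b ^ 2 * (lam u) ^ 4 := by
    intro u hu
    have hc := (hcos u hu).ne'
    have e : 2 * b ^ 2 * (lam u) ^ 4 = (2 * b ^ 2 * r ^ 2) * r ^ 2 / Real.cos (θ u) ^ 4 := by
      rw [hlam]; field_simp
    rw [e, hb4, (hl1 u hu).deriv, hlam, ← hc1, hc2, div_pow, mul_pow, mul_pow, hθ' u hu,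
      Real.sin_sq]
    field_simp
    ring
  have hsecond : ∀ u ∈ I,
      deriv (deriv lam) u * lam u - (deriv lam u) ^ 2 = c₁ + 2 * b ^ 2 * (lam u) ^ 4 := by
    intro u hu
    have hc := (hcos u hu).ne'
    have e : 2 * b ^ 2 * (lam u) ^ 4 = (2 * b ^ 2 * r ^ 2) * r ^ 2 / Real.cos (θ u) ^ 4 := by
      rw [hlam]; field_simp
    have e2 : deriv (deriv lam) u * lam u - (deriv lam u) ^ 2 =
        r ^ 2 * (deriv θ u ^ 2 * (Real.cos (θ u) ^ 2 + Real.sin (θ u) ^ 2)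
          - (s * m) * Real.sin (θ u) ^ 2 * Real.cos (θ u) ^ 2) / Real.cos (θ u) ^ 4 := by
      rw [(hl1 u hu).deriv, (hl2 u hu).deriv, hlam, hθ'' u hu]
      field_simp
      ring
    rw [e2, e, hb4, ← hc1, hθ' u hu, Real.sin_sq]
    field_simp
    ring
  have hKe : ∀ u ∈ I, K u = -2 * b ^ 2 - c₁ / (lam u) ^ 4 := by
    intro u hu
    have h := hsecond u hu
    have hp := (hpos u hu).ne'
    rw [hK, show -(lam u) * deriv (deriv lam) u + (deriv lam u) ^ 2
      = -(c₁ + 2 * b ^ 2 * (lam u) ^ 4) by linarith]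
    field_simp
    ring
  refine ⟨?_, hpos, hfirst, hsecond, ?_, ?_⟩
  · rw [hlamf]
    exact contDiffOn_const.div (Real.contDiff_cos.comp_contDiffOn hθ)
      (fun u hu => (hcos u hu).ne')
  · intro u hu
    refine ⟨hKe u hu, ?_⟩
    rw [hKe u hu]
    have : 0 < c₁ / (lam u) ^ 4 := div_pos hc₁ (pow_pos (hpos u hu) 4)
    linarith
  · intro u hu
    have hlog : ∀ t ∈ I, Real.log (Real.sqrt (-2 * b ^ 2 - K t))
        = Real.log c₁ / 2 - 2 * Real.log (lam t) := by
      intro t ht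
      have hp := hpos t ht
      have e : -2 * b ^ 2 - K t = c₁ / (lam t) ^ 4 := by rw [hKe t ht]; ring
      rw [e, Real.log_sqrt (by positivity), Real.log_div hc₁.ne' (by positivity), Real.log_pow]
      push_cast
      ring
    have hld : ∀ t ∈ I, HasDerivAt lam (deriv lam t) t := fun t ht =>
      (hl1 t ht).differentiableAt.hasDerivAt
    have hD1 : ∀ t ∈ I, deriv (fun t => Real.log (Real.sqrt (-2 * b ^ 2 - K t))) t
        = -(2 * (deriv lam t / lam t)) := by
      intro t ht
      exact ((((hld t ht).log (hpos t ht).ne').const_mul 2).const_sub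
        (Real.log c₁ / 2)).congr_of_eventuallyEq
        (Filter.eventually_of_mem (hI.mem_nhds ht) hlog) |>.deriv
    have hp := (hpos u hu).ne'
    have hD2 := ((((hl2 u hu).differentiableAt.hasDerivAt.div (hld u hu) hp).const_mul
      2).neg).congr_of_eventuallyEq (Filter.eventually_of_mem (hI.mem_nhds hu) hD1) |>.deriv
    rw [hD2, hKe u hu]
    have h := hsecond u hu
    rw [show deriv (deriv lam) u * lam u - deriv lam u * deriv lam u
      = c₁ + 2 * b ^ 2 * (lam u) ^ 4 by rw [← h]; ring]
    field_simp
    ring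
end

section
/- Let I ⊆ ℝ be an open interval, λ : I → ℝ smooth with λ(u) > 0 on I, and b > 0. Define K(u) = (−λ(u)λ''(u) + λ'(u)²)/λ(u)⁴ and assume K(u) < −2b² on I and that λ(u)⁴·(−2b² − K(u)) is equal to a constant c₁ > 0 on I. Then there exists a constant c₂ ∈ ℝ such that, setting s = √(c₂² + 8b²c₁), λ₊ = (−c₂ + s)/(4b²), and k² = (c₂ + s)/(2s), there is a smooth function θ : I → ℝ with cos θ(u) > 0, θ'(u)² = s·(1 − k²·sin² θ(u)), and λ(u) = √λ₊ / cos θ(u) for all u ∈ I. -/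
/-- If the curvature `K` of a special Liouville metric satisfies `K < -2b²`
and `λ⁴(-2b² - K) = c₁` identically, then there are a constant `c₂` and a smooth function
`θ` with `cos θ > 0`, `θ'² = s(1 - k² sin²θ)` and `λ = √λ₊ / cos θ`, where
`s = √(c₂² + 8b²c₁)`, `λ₊ = (-c₂ + s)/(4b²)` and `k² = (c₂ + s)/(2s)`. -/
theorem stmt_9 (b c₁ : ℝ) (I : Set ℝ) (hI : IsOpen I) (hI' : I.OrdConnected) (hb : 0 < b) (hc₁ : 0 < c₁)
    (lam : ℝ → ℝ) (hlam : ContDiffOn ℝ (⊤ : ℕ∞) lam (I))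
    (hpos : ∀ u ∈ I, 0 < lam u)
    (K : ℝ → ℝ)
    (hK : ∀ u, K u =
      (-(lam u) * deriv (deriv lam) u + (deriv lam u) ^ 2) / (lam u) ^ 4)
    (hKlt : ∀ u ∈ I, K u < -2 * b ^ 2)
    (hconst : ∀ u ∈ I, (lam u) ^ 4 * (-2 * b ^ 2 - K u) = c₁) :
    ∃ c₂ : ℝ, ∃ θ : ℝ → ℝ,
      ContDiffOn ℝ (⊤ : ℕ∞) θ (I) ∧
      ∀ u ∈ I,
        0 < Real.cos (θ u) ∧
        (deriv θ u) ^ 2 = Real.sqrt (c₂ ^ 2 + 8 * b ^ 2 * c₁) *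
          (1 - ((c₂ + Real.sqrt (c₂ ^ 2 + 8 * b ^ 2 * c₁)) /
              (2 * Real.sqrt (c₂ ^ 2 + 8 * b ^ 2 * c₁))) * Real.sin (θ u) ^ 2) ∧
        lam u = Real.sqrt ((-c₂ + Real.sqrt (c₂ ^ 2 + 8 * b ^ 2 * c₁)) / (4 * b ^ 2)) /
          Real.cos (θ u) := by
  have hd1 : ContDiffOn ℝ (⊤ : ℕ∞) (deriv lam) I :=
    ((contDiffOn_infty_iff_deriv_of_isOpen hI).1 hlam).2
  have h1 : ∀ u ∈ I, HasDerivAt lam (deriv lam u) u := fun u hu =>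
    ((hlam.differentiableOn (by simp)).differentiableAt (hI.mem_nhds hu)).hasDerivAt
  have h2 : ∀ u ∈ I, HasDerivAt (deriv lam) (deriv (deriv lam) u) u := fun u hu =>
    ((hd1.differentiableOn (by simp)).differentiableAt (hI.mem_nhds hu)).hasDerivAt
  have hode : ∀ u ∈ I, lam u * deriv (deriv lam) u
      = deriv lam u ^ 2 + 2 * b ^ 2 * lam u ^ 4 + c₁ := by
    intro u hu
    have h := hconst u hu
    have hp := (hpos u hu).ne'
    rw [hK] at h
    field_simp at h
    linarith
  obtain ⟨c₂, hc₂⟩ : ∃ c₂ : ℝ, ∀ u ∈ I,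
      (deriv lam u / lam u) ^ 2 - 2 * b ^ 2 * lam u ^ 2 + c₁ / lam u ^ 2 = c₂ := by
    have hder : ∀ u ∈ I, HasDerivAt (fun u => (deriv lam u / lam u) ^ 2
        - 2 * b ^ 2 * lam u ^ 2 + c₁ / lam u ^ 2) 0 u := by
      intro u hu
      have hp := (hpos u hu).ne'
      have H := ((((h2 u hu).div (h1 u hu) hp).pow 2).sub
        (((h1 u hu).pow 2).const_mul (2 * b ^ 2))).add
        ((hasDerivAt_const u c₁).div ((h1 u hu).pow 2) (pow_ne_zero 2 hp))
      refine H.congr_deriv ?_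
      have ho := hode u hu
      have ho' : deriv (deriv lam) u
        = (deriv lam u ^ 2 + 2 * b ^ 2 * lam u ^ 4 + c₁) / lam u := by
        field_simp; linarith
      simp only [Pi.div_apply, Pi.pow_apply, ho', show 2 - 1 = 1 from rfl, pow_one]
      push_cast
      field_simp
      ring
    exact hI.exists_is_const_of_deriv_eq_zero hI'.isPreconnected
      (fun u hu => (hder u hu).differentiableAt.differentiableWithinAt)
      (fun u hu => (hder u hu).deriv)
  refine ⟨c₂, ?_⟩
  have hpq : 0 < 8 * b ^ 2 * c₁ := by positivity
  obtain ⟨s, hs⟩ : ∃ s, s = Real.sqrt (c₂ ^ 2 + 8 * b ^ 2 * c₁) := ⟨_, rfl⟩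
  have hs2 : s ^ 2 = c₂ ^ 2 + 8 * b ^ 2 * c₁ := by
    rw [hs]; exact Real.sq_sqrt (by positivity)
  have hsabs : |c₂| < s := by
    rw [hs]; apply Real.lt_sqrt_of_sq_lt; rw [sq_abs]; linarith
  have hs0 : 0 < s := lt_of_le_of_lt (abs_nonneg _) hsabs
  rw [← hs]
  obtain ⟨p, hp⟩ : ∃ p, p = (-c₂ + s) / (4 * b ^ 2) := ⟨_, rfl⟩
  obtain ⟨q, hq⟩ : ∃ q, q = (c₂ + s) / (4 * b ^ 2) := ⟨_, rfl⟩
  have hp0 : 0 < p := by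
    rw [hp]; apply div_pos _ (by positivity); linarith [le_abs_self c₂]
  have hq0 : 0 < q := by
    rw [hq]; apply div_pos _ (by positivity); linarith [neg_abs_le c₂]
  rw [← hp]
  have hsp : s = 2 * b ^ 2 * (p + q) := by rw [hp, hq]; field_simp; ring
  have hcp : c₂ = 2 * b ^ 2 * (q - p) := by rw [hp, hq]; field_simp; ring
  have hc1 : c₁ = 2 * b ^ 2 * p * q := by
    have : 8 * b ^ 2 * c₁ = 8 * b ^ 2 * (2 * b ^ 2 * p * q) := by
      rw [hsp, hcp] at hs2; linarith
    exact mul_left_cancel₀ (by positivity) this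
  have hA0 : ∀ u, 0 < 2 * b ^ 2 * p * (lam u ^ 2 + q) := fun u => by positivity
  have hfirst : ∀ u ∈ I, deriv lam u ^ 2 = 2 * b ^ 2 * (lam u ^ 2 - p) * (lam u ^ 2 + q) := by
    intro u hu
    have h := hc₂ u hu
    have hp := (hpos u hu).ne'
    field_simp at h
    rw [hcp, hc1] at h
    linarith
  have hsecond : ∀ u ∈ I, deriv (deriv lam) u
      = 4 * b ^ 2 * lam u ^ 3 + 2 * b ^ 2 * (q - p) * lam u := by
    intro u hu
    have h := hode u hu
    rw [hfirst u hu, hc1] at h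
    apply mul_left_cancel₀ (hpos u hu).ne'
    rw [h]; ring
  refine ⟨fun u => Real.arctan (deriv lam u / Real.sqrt (2 * b ^ 2 * p * (lam u ^ 2 + q))),
    ?_, ?_⟩
  · refine Real.contDiff_arctan.comp_contDiffOn (hd1.div ?_ ?_)
    · exact ContDiffOn.sqrt (contDiffOn_const.mul ((hlam.pow 2).add contDiffOn_const))
        (fun u _ => (hA0 u).ne')
    · exact fun u _ => (Real.sqrt_pos.2 (hA0 u)).ne'
  · intro u hu
    have hl := hpos u hu
    obtain ⟨A, hA⟩ : ∃ A, A = Real.sqrt (2 * b ^ 2 * p * (lam u ^ 2 + q)) := ⟨_, rfl⟩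
    have hApos : 0 < A := by rw [hA]; exact Real.sqrt_pos.2 (hA0 u)
    have hA2 : A ^ 2 = 2 * b ^ 2 * p * (lam u ^ 2 + q) := by
      rw [hA]; exact Real.sq_sqrt (hA0 u).le
    have hT : 1 + (deriv lam u / A) ^ 2 = lam u ^ 2 / p := by
      rw [div_pow, hfirst u hu, hA2]
      have : lam u ^ 2 + q ≠ 0 := by positivity
      field_simp
      ring
    have hcos2 : Real.cos (Real.arctan (deriv lam u / A)) ^ 2 = p / lam u ^ 2 := by
      rw [Real.cos_sq_arctan, hT, one_div_div]
    have hcos := Real.cos_arctan_pos (deriv lam u / A)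
    have hsin2 : Real.sin (Real.arctan (deriv lam u / A)) ^ 2 = 1 - p / lam u ^ 2 := by
      rw [Real.sin_sq, hcos2]
    have hD : HasDerivAt (fun u => Real.arctan
        (deriv lam u / Real.sqrt (2 * b ^ 2 * p * (lam u ^ 2 + q)))) (A / lam u) u := by
      have hS := ((((h1 u hu).pow 2).add_const q).const_mul (2 * b ^ 2 * p)).sqrt (hA0 u).ne'
      have H := ((h2 u hu).div hS (Real.sqrt_pos.2 (hA0 u)).ne').arctan
      refine H.congr_deriv ?_
      simp only [Pi.div_apply, Pi.pow_apply, ← hA]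
      rw [hT, hsecond u hu]
      have e : ((4 * b ^ 2 * lam u ^ 3 + 2 * b ^ 2 * (q - p) * lam u) * A ^ 2
          - deriv lam u ^ 2 * (2 * b ^ 2 * p * lam u)) * p = A ^ 4 * lam u := by
        rw [show A ^ 4 = (A ^ 2) ^ 2 by ring, hA2, hfirst u hu]; ring
      field_simp
      push_cast
      norm_num
      linear_combination e
    simp only [← hA]
    refine ⟨hcos, ?_, ?_⟩
    · rw [hD.deriv, hsin2, div_pow, hA2, hcp, hsp]
      have : p + q ≠ 0 := by positivity
      field_simp
      ring
    · rw [eq_div_iff hcos.ne']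
      symm
      rw [Real.sqrt_eq_iff_mul_self_eq hp0.le (by positivity)]
      rw [← sq, mul_pow, hcos2]
      field_simp
end
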